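/- Lemma 2 (soft covering with likelihood encoding). Fix finite alphabets 𝒰, 𝒮, 𝒵, a pmf P_S, a conditional pmf P_{U|S}, and a channel inducing P_{Z|U,S}; let P_U, P_{S|U}, P_Z be the corresponding induced distributions. For each n, generate a random codebook 𝒞 of 2^{n(R_K+R+R')} codewords uⁿ(k,m,l), k ∈ [1:2^{nR_K}], m ∈ [1:2^{nR}], l ∈ [1:2^{nR'}], each drawn i.i.d. ∼ P_U^{×n} independently. Given i.i.d. state sequence Sⁿ ∼ P_S^{×n}, independent uniform key K and message M, the likelihood encoder draws L with probability g(l|Sⁿ,K,M) ∝ P_{S|U}^{×n}(Sⁿ|uⁿ(K,M,l)), and Zⁿ is generated from (uⁿ(K,M,L), Sⁿ) through P_{Z|U,S} memorylessly; let P̂_{Zⁿ} be the induced distribution of Zⁿ (for a fixed codebook). If R' > I(U;S) and R + R_K + R' > I(U;Z), then E_𝒞[ D(P̂_{Zⁿ} ‖ P_Z^{×n}) ] → 0 as n → ∞. -/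

import Mathlib

open scoped BigOperators

noncomputable section

namespace SoftCovering

/-- `p` is a probability mass function on the finite alphabet `α`. -/
def IsPMF {α : Type} [Fintype α] (p : α → ℝ) : Prop :=
  (∀ a, 0 ≤ p a) ∧ ∑ a, p a = 1

/-- Kullback-Leibler divergence (in bits) between pmfs on a finite alphabet. -/
def klDiv {α : Type} [Fintype α] (p q : α → ℝ) : ℝ :=
  ∑ a, p a * Real.logb 2 (p a / q a)

/-- Mutual information (in bits) of a joint pmf, given in curried form. -/
def mutualInfo {α β : Type} [Fintype α] [Fintype β] (p : α → β → ℝ) : ℝ :=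
  ∑ a, ∑ b, p a b * Real.logb 2 (p a b / ((∑ b', p a b') * (∑ a', p a' b)))

variable {𝒰 𝒮 𝒵 : Type} [Fintype 𝒰] [Fintype 𝒮] [Fintype 𝒵]

/-- Marginal `P_U` of the joint distribution `P_S(s) P_{U|S}(u|s)`. -/
def PU (PS : 𝒮 → ℝ) (pU : 𝒮 → 𝒰 → ℝ) (u : 𝒰) : ℝ := ∑ s, PS s * pU s u

/-- Conditional pmf `P_{S|U}` of the joint distribution `P_S(s) P_{U|S}(u|s)`. -/
def PSgivenU (PS : 𝒮 → ℝ) (pU : 𝒮 → 𝒰 → ℝ) (s : 𝒮) (u : 𝒰) : ℝ :=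
  PS s * pU s u / PU PS pU u

/-- Marginal `P_Z` of the joint distribution `P_S(s) P_{U|S}(u|s) P_{Z|U,S}(z|u,s)`. -/
def PZ (PS : 𝒮 → ℝ) (pU : 𝒮 → 𝒰 → ℝ) (W : 𝒰 → 𝒮 → 𝒵 → ℝ) (z : 𝒵) : ℝ :=
  ∑ u, ∑ s, PS s * pU s u * W u s z

/-- A codebook: one length-`n` codeword `uⁿ(k,m,l)` for each key `k`, message
`m` and index `l`. -/
abbrev Codebook (𝒰 : Type) (n K M L : ℕ) := Fin K × Fin M × Fin L → Fin n → 𝒰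

/-- Probability of drawing the codebook `C` when all codewords are i.i.d.
`∼ P_U^{×n}`. -/
def cbProb (PU : 𝒰 → ℝ) {n K M L : ℕ} (C : Codebook 𝒰 n K M L) : ℝ :=
  ∏ idx, ∏ i, PU (C idx i)

/-- The likelihood encoder: `g(l|sⁿ,k,m) ∝ P_{S|U}^{×n}(sⁿ|uⁿ(k,m,l))`. -/
def likelihood (PS : 𝒮 → ℝ) (pU : 𝒮 → 𝒰 → ℝ) {n K M L : ℕ}
    (C : Codebook 𝒰 n K M L) (k : Fin K) (m : Fin M) (l : Fin L)
    (s : Fin n → 𝒮) : ℝ :=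
  (∏ i, PSgivenU PS pU (s i) (C (k, m, l) i)) /
    ∑ l', ∏ i, PSgivenU PS pU (s i) (C (k, m, l') i)

/-- The distribution `P̂_{Zⁿ}` of the warden's observation for a fixed codebook
`C`: `K` and `M` are uniform, `Sⁿ ∼ P_S^{×n}`, `L` is drawn by the likelihood
encoder, and `Zⁿ` is produced memorylessly from `(uⁿ(K,M,L), Sⁿ)` through
`P_{Z|U,S}`. -/
def PhatZ (PS : 𝒮 → ℝ) (pU : 𝒮 → 𝒰 → ℝ) (W : 𝒰 → 𝒮 → 𝒵 → ℝ) {n K M L : ℕ}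
    (C : Codebook 𝒰 n K M L) (z : Fin n → 𝒵) : ℝ :=
  ∑ k, ∑ m, ∑ s : Fin n → 𝒮, ∑ l,
    (K : ℝ)⁻¹ * (M : ℝ)⁻¹ * (∏ i, PS (s i)) * likelihood PS pU C k m l s *
      ∏ i, W (C (k, m, l) i) (s i) (z i)

/-- Expected divergence `E_𝒞[D(P̂_{Zⁿ} ‖ P_Z^{×n})]` over the random codebook. -/
def expDiv (PS : 𝒮 → ℝ) (pU : 𝒮 → 𝒰 → ℝ) (W : 𝒰 → 𝒮 → 𝒵 → ℝ)
    [DecidableEq 𝒰] (n K M L : ℕ) : ℝ :=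
  ∑ C : Codebook 𝒰 n K M L,
    cbProb (PU PS pU) C *
      klDiv (PhatZ PS pU W C) (fun z => ∏ i, PZ PS pU W (z i))

/-! Draw key, message and index uniformly and generate the state from the codeword through
`P_{S|U}` instead of the other way round. Since `R' > I(U;S)`, the `2^{nR'}` codewords of each
pair (key, message) cover `P_S^{×n}` in `L¹` with an exponentially small error, and this error
bounds the `L¹` distance between the idealized experiment and the likelihood encoder. In the
idealized experiment `Zⁿ` is the output of the memoryless channel `P_{Z|U}` driven by a uniformly
chosen codeword, so `R + R_K + R' > I(U;Z)` lets the same covering bound compare it with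
`P_Z^{×n}`.

The covering bound comes from a second-moment estimate of the codebook average, after truncating
the channel where the information density exceeds a threshold between the mutual information and
the rate; the truncated part is exponentially small by a Chernoff bound. Finally,
`P̂_{Zⁿ} ≤ bⁿ P_Z^{×n}` for a constant `b`, so the divergence is at most `O(n)` times the `L¹`
distance. -/

section Mean

/-- The mean `∑ ω, μ ω * f ω` of `f` with respect to the weights `μ`. The weights need not sum to
one, since the likelihood encoder may have total mass less than one. -/
def mean {Ω : Type*} [Fintype Ω] (μ f : Ω → ℝ) : ℝ := ∑ ω, μ ω * f ω

variable {Ω : Type*} [Fintype Ω] {μ f g : Ω → ℝ}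

lemma mean_mono (hμ : ∀ ω, 0 ≤ μ ω) (hfg : ∀ ω, f ω ≤ g ω) : mean μ f ≤ mean μ g :=
  Finset.sum_le_sum fun ω _ => mul_le_mul_of_nonneg_left (hfg ω) (hμ ω)

lemma mean_nonneg (hμ : ∀ ω, 0 ≤ μ ω) (hf : ∀ ω, 0 ≤ f ω) : 0 ≤ mean μ f :=
  Finset.sum_nonneg fun ω _ => mul_nonneg (hμ ω) (hf ω)

lemma mean_add (μ f g : Ω → ℝ) : mean μ (fun ω => f ω + g ω) = mean μ f + mean μ g := by
  simp only [mean, mul_add, Finset.sum_add_distrib]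

lemma mean_const_mul (μ f : Ω → ℝ) (c : ℝ) : mean μ (fun ω => c * f ω) = c * mean μ f := by
  simp only [mean, mul_left_comm, Finset.mul_sum]

lemma mean_sum {κ : Type*} [Fintype κ] (μ : Ω → ℝ) (f : κ → Ω → ℝ) :
    mean μ (fun ω => ∑ k, f k ω) = ∑ k, mean μ (f k) := by
  simp only [mean, Finset.mul_sum]
  exact Finset.sum_comm

lemma mean_expect {κ : Type*} [Fintype κ] (μ : Ω → ℝ) (f : κ → Ω → ℝ) :
    mean μ (fun ω => 𝔼 k, f k ω) = 𝔼 k, mean μ (f k) := by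
  simp only [mean, Finset.mul_expect]
  exact (Finset.expect_sum_comm _ _ _).symm

lemma abs_mean_le (hμ : ∀ ω, 0 ≤ μ ω) (f : Ω → ℝ) : |mean μ f| ≤ mean μ fun ω => |f ω| := by
  refine (Finset.abs_sum_le_sum_abs _ _).trans_eq (Finset.sum_congr rfl fun ω _ => ?_)
  rw [abs_mul, abs_of_nonneg (hμ ω)]

end Mean

namespace IsPMF

variable {Ω : Type} [Fintype Ω] {μ : Ω → ℝ}

lemma mean_const (hμ : IsPMF μ) (c : ℝ) : mean μ (fun _ => c) = c := by
  rw [mean, ← Finset.sum_mul, hμ.2, one_mul]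

lemma mean_sub_const (hμ : IsPMF μ) (f : Ω → ℝ) (c : ℝ) :
    mean μ (fun ω => f ω - c) = mean μ f - c := by
  simp only [sub_eq_add_neg, mean_add, hμ.mean_const]

lemma mean_abs_le_sqrt (hμ : IsPMF μ) (f : Ω → ℝ) :
    mean μ (fun ω => |f ω|) ≤ √(mean μ fun ω => f ω ^ 2) := by
  refine Real.le_sqrt_of_sq_le ?_
  simpa only [mean, sq_abs] using
    Real.pow_arith_mean_le_arith_mean_pow_of_even Finset.univ μ (fun ω => |f ω|)
      (fun ω _ => hμ.1 ω) hμ.2 even_two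

lemma mean_sub_mean_sq_le (hμ : IsPMF μ) (f : Ω → ℝ) :
    mean μ (fun ω => (f ω - mean μ f) ^ 2) ≤ mean μ fun ω => f ω ^ 2 := by
  have expand : mean μ (fun ω => (f ω - mean μ f) ^ 2)
      = mean μ (fun ω => f ω ^ 2) - mean μ f ^ 2 := calc
    _ = mean μ (fun ω => f ω ^ 2 + (-2 * mean μ f * f ω + mean μ f ^ 2)) := by
      congr! 2 with ω; ring
    _ = _ := by rw [mean_add, mean_add, mean_const_mul, hμ.mean_const]; ring
  linarith [sq_nonneg (mean μ f)]

lemma le_one (hμ : IsPMF μ) (ω : Ω) : μ ω ≤ 1 :=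
  hμ.2 ▸ Finset.single_le_sum (fun ω _ => hμ.1 ω) (Finset.mem_univ ω)

end IsPMF

section ProductLaw

/-- The product distribution `μ^{×ι}` on families of letters indexed by `ι`. -/
def iidLaw {Ω : Type*} (ι : Type*) [Fintype ι] (μ : Ω → ℝ) (x : ι → Ω) : ℝ := ∏ i, μ (x i)

lemma mean_pi_prod {Ω ι : Type*} [Fintype Ω] [Fintype ι] [DecidableEq ι] (μ g : ι → Ω → ℝ) :
    mean (fun x : ι → Ω => ∏ i, μ i (x i)) (fun x => ∏ i, g i (x i)) = ∏ i, mean (μ i) (g i) := by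
  simp only [mean, ← Finset.prod_mul_distrib]
  exact (Fintype.prod_sum fun i ω => μ i ω * g i ω).symm

lemma mean_iid_prod {Ω ι : Type*} [Fintype Ω] [Fintype ι] [DecidableEq ι] (μ : Ω → ℝ)
    (g : ι → Ω → ℝ) :
    mean (iidLaw ι μ) (fun x => ∏ i, g i (x i)) = ∏ i, mean μ (g i) :=
  mean_pi_prod (fun _ => μ) g

lemma IsPMF.pi {Ω ι : Type} [Fintype Ω] [Fintype ι] [DecidableEq ι] {μ : ι → Ω → ℝ}
    (hμ : ∀ i, IsPMF (μ i)) : IsPMF fun x : ι → Ω => ∏ i, μ i (x i) :=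
  ⟨fun x => Finset.prod_nonneg fun i _ => (hμ i).1 (x i), by
    simp [← Fintype.prod_sum, (hμ _).2]⟩

lemma IsPMF.iid {Ω ι : Type} [Fintype Ω] [Fintype ι] [DecidableEq ι] {μ : Ω → ℝ}
    (hμ : IsPMF μ) : IsPMF (iidLaw ι μ) :=
  IsPMF.pi fun _ => hμ

variable {Ω ι J : Type} [Fintype Ω] [Fintype ι] [DecidableEq ι] [Fintype J] {μ : Ω → ℝ}

lemma IsPMF.mean_iid_eval (hμ : IsPMF μ) (g : Ω → ℝ) (i : ι) :
    mean (iidLaw ι μ) (fun x => g (x i)) = mean μ g := by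
  have h := mean_iid_prod μ fun j ω => if j = i then g ω else 1
  rw [Fintype.prod_eq_single i fun _ hj => by simp [hj, hμ.mean_const]] at h
  simpa using h

lemma IsPMF.mean_iid_eval_mul_eval (hμ : IsPMF μ) (g h : Ω → ℝ) {i j : ι} (hij : i ≠ j) :
    mean (iidLaw ι μ) (fun x => g (x i) * h (x j)) = mean μ g * mean μ h := by
  have key := mean_iid_prod μ fun k ω => (if k = i then g ω else 1) * (if k = j then h ω else 1)
  rw [Fintype.prod_eq_mul i j hij fun k hk => by simp [hk.1, hk.2, hμ.mean_const]] at key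
  simp only [Finset.prod_mul_distrib, Finset.prod_ite_eq', Finset.mem_univ, if_true] at key
  simpa only [hij, hij.symm, if_true, if_false, mul_one, one_mul] using key

lemma IsPMF.mean_iid_sum_sq (hμ : IsPMF μ) {g : Ω → ℝ} (hg : mean μ g = 0) (f : J ↪ ι) :
    mean (iidLaw ι μ) (fun x => (∑ j, g (x (f j))) ^ 2)
      = Fintype.card J * mean μ fun ω => g ω ^ 2 := by
  have uncorrelated (a b : J) (hab : b ≠ a) :
      mean (iidLaw ι μ) (fun x => g (x (f a)) * g (x (f b))) = 0 := by
    rw [hμ.mean_iid_eval_mul_eval g g (f.injective.ne hab.symm), hg, zero_mul]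
  have row (a : J) : ∑ b, mean (iidLaw ι μ) (fun x => g (x (f a)) * g (x (f b)))
      = mean μ fun ω => g ω ^ 2 := by
    rw [Fintype.sum_eq_single a fun b => uncorrelated a b]
    simpa only [sq] using hμ.mean_iid_eval (fun ω => g ω * g ω) (f a)
  simp only [sq (Finset.sum _ _), Finset.sum_mul_sum, mean_sum, row, Finset.sum_const,
    Finset.card_univ, nsmul_eq_mul]

lemma IsPMF.mean_iid_abs_expect_sub_le_sqrt [Nonempty J] (hμ : IsPMF μ) (g : Ω → ℝ) (f : J ↪ ι) :
    mean (iidLaw ι μ) (fun x => |𝔼 j, g (x (f j)) - mean μ g|)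
      ≤ √(mean μ (fun ω => g ω ^ 2) / Fintype.card J) := by
  set m := mean μ g
  have center (x : ι → Ω) : 𝔼 j, g (x (f j)) - m
      = (Fintype.card J : ℝ)⁻¹ * ∑ j, (g (x (f j)) - m) := by
    rw [← div_eq_inv_mul, ← Fintype.expect_eq_sum_div_card, Finset.expect_sub_distrib,
      Fintype.expect_const]
  refine (hμ.iid.mean_abs_le_sqrt _).trans (Real.sqrt_le_sqrt ?_)
  calc mean (iidLaw ι μ) (fun x => (𝔼 j, g (x (f j)) - m) ^ 2)
      = (Fintype.card J : ℝ)⁻¹ ^ 2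
          * (Fintype.card J * mean μ fun ω => (g ω - m) ^ 2) := by
        have centered : mean μ (fun ω => g ω - m) = 0 := by rw [hμ.mean_sub_const, sub_self]
        simp only [center, mul_pow, mean_const_mul, hμ.mean_iid_sum_sq centered]
    _ = (mean μ fun ω => (g ω - m) ^ 2) / Fintype.card J := by field_simp
    _ ≤ (mean μ fun ω => g ω ^ 2) / Fintype.card J := by
        gcongr
        exact hμ.mean_sub_mean_sq_le g

lemma IsPMF.mean_iid_expect [Nonempty J] (hμ : IsPMF μ) (g : Ω → ℝ) (f : J → ι) :
    mean (iidLaw ι μ) (fun x => 𝔼 j, g (x (f j))) = mean μ g := by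
  simp only [mean_expect, hμ.mean_iid_eval, Fintype.expect_const]

lemma IsPMF.mean_iid_abs_expect_sub_le_two_mul [Nonempty J] (hμ : IsPMF μ) {g : Ω → ℝ}
    (hg : ∀ ω, 0 ≤ g ω) (f : J → ι) :
    mean (iidLaw ι μ) (fun x => |𝔼 j, g (x (f j)) - mean μ g|) ≤ 2 * mean μ g := by
  have hm : 0 ≤ mean μ g := mean_nonneg hμ.1 hg
  calc mean (iidLaw ι μ) (fun x => |𝔼 j, g (x (f j)) - mean μ g|)
      ≤ mean (iidLaw ι μ) (fun x => 𝔼 j, g (x (f j)) + mean μ g) :=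
        mean_mono hμ.iid.1 fun x => by
          have : 0 ≤ 𝔼 j, g (x (f j)) := Finset.expect_nonneg fun j _ => hg _
          exact abs_le.2 ⟨by linarith, by linarith⟩
    _ = 2 * mean μ g := by
        rw [mean_add, hμ.mean_iid_expect, hμ.iid.mean_const, two_mul]

/- The part of `g` below `t` has second moment at most `t * mean μ g`; the part above it is
controlled in `L¹`. -/
lemma IsPMF.mean_iid_abs_expect_sub_le_add_tail [Nonempty J] (hμ : IsPMF μ) {g : Ω → ℝ}
    (hg : ∀ ω, 0 ≤ g ω) {t : ℝ} (ht : 0 ≤ t) (f : J ↪ ι) :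
    mean (iidLaw ι μ) (fun x => |𝔼 j, g (x (f j)) - mean μ g|)
      ≤ √(t * mean μ g / Fintype.card J) + 2 * mean μ fun ω => if t < g ω then g ω else 0 := by
  set low : Ω → ℝ := fun ω => if t < g ω then 0 else g ω
  set high : Ω → ℝ := fun ω => if t < g ω then g ω else 0
  have split (ω : Ω) : g ω = low ω + high ω := by simp only [low, high]; split_ifs <;> simp
  have mean_split : mean μ g = mean μ low + mean μ high := by rw [← mean_add, ← funext split]
  have high_nonneg (ω : Ω) : 0 ≤ high ω := by
    simp only [high]; split_ifs <;> simp [hg]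
  have low_sq_le (ω : Ω) : low ω ^ 2 ≤ t * g ω := by
    simp only [low]; split_ifs <;> nlinarith [hg ω]
  calc mean (iidLaw ι μ) (fun x => |𝔼 j, g (x (f j)) - mean μ g|)
      ≤ mean (iidLaw ι μ) (fun x => |𝔼 j, low (x (f j)) - mean μ low|
          + |𝔼 j, high (x (f j)) - mean μ high|) :=
        mean_mono hμ.iid.1 fun x => by
          rw [Finset.expect_congr rfl fun j _ => split (x (f j)), Finset.expect_add_distrib,
            mean_split, add_sub_add_comm]
          exact abs_add_le _ _
    _ ≤ √(mean μ (fun ω => low ω ^ 2) / Fintype.card J) + 2 * mean μ high := by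
        rw [mean_add]
        exact add_le_add (hμ.mean_iid_abs_expect_sub_le_sqrt low f)
          (hμ.mean_iid_abs_expect_sub_le_two_mul high_nonneg f)
    _ ≤ √(t * mean μ g / Fintype.card J) + 2 * mean μ high := by
        gcongr
        exact (mean_mono hμ.1 low_sq_le).trans_eq (mean_const_mul μ g t)

end ProductLaw

section RandomCode

/-- The `L¹` distance `∑ y, |p y - q y|`, twice the total variation distance. -/
def l1Dist {Y : Type*} [Fintype Y] (p q : Y → ℝ) : ℝ := ∑ y, |p y - q y|

/-- The output distribution of the channel `w` when its input is drawn from `μ`. -/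
def outputDist {Ω Y : Type*} [Fintype Ω] (μ : Ω → ℝ) (w : Ω → Y → ℝ) (y : Y) : ℝ :=
  mean μ fun ω => w ω y

/-- The output distribution of the channel `w` when its input is a uniformly chosen codeword of
`c`. -/
def codeOutput {Ω J Y : Type*} [Fintype J] (w : Ω → Y → ℝ) (c : J → Ω) (y : Y) : ℝ :=
  𝔼 j, w (c j) y

lemma l1Dist_triangle {Y : Type*} [Fintype Y] (p q r : Y → ℝ) :
    l1Dist p r ≤ l1Dist p q + l1Dist q r :=
  (Finset.sum_le_sum fun _ _ => abs_sub_le _ _ _).trans_eq Finset.sum_add_distrib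

lemma sum_outputDist {Ω Y : Type} [Fintype Ω] [Fintype Y] (μ : Ω → ℝ) {w : Ω → Y → ℝ}
    (hw : ∀ ω, IsPMF (w ω)) : ∑ y, outputDist μ w y = ∑ ω, μ ω := by
  simp only [outputDist, mean]
  rw [Finset.sum_comm]
  simp only [← Finset.mul_sum, (hw _).2, mul_one]

lemma l1Dist_outputDist_le {Ω Y : Type} [Fintype Ω] [Fintype Y] (μ ν : Ω → ℝ) {w : Ω → Y → ℝ}
    (hw : ∀ ω, IsPMF (w ω)) : l1Dist (outputDist μ w) (outputDist ν w) ≤ l1Dist μ ν := by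
  have pointwise (y : Y) :
      |outputDist μ w y - outputDist ν w y| ≤ outputDist (fun ω => |μ ω - ν ω|) w y := by
    simp only [outputDist, mean, ← Finset.sum_sub_distrib, ← sub_mul]
    refine (Finset.abs_sum_le_sum_abs _ _).trans_eq (Finset.sum_congr rfl fun ω _ => ?_)
    rw [abs_mul, abs_of_nonneg ((hw ω).1 y)]
  exact (Finset.sum_le_sum fun y _ => pointwise y).trans_eq (sum_outputDist _ hw)

lemma IsPMF.mean_l1Dist_codeOutput_le {Ω ι J Y : Type} [Fintype Ω] [Fintype ι] [DecidableEq ι]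
    [Fintype J] [Nonempty J] [Fintype Y] {μ : Ω → ℝ} (hμ : IsPMF μ) {w : Ω → Y → ℝ}
    (hw : ∀ ω y, 0 ≤ w ω y) (hout : IsPMF (outputDist μ w)) {t : ℝ} (ht : 0 ≤ t) (f : J ↪ ι) :
    mean (iidLaw ι μ) (fun C => l1Dist (codeOutput w (C ∘ f)) (outputDist μ w))
      ≤ √(t / Fintype.card J) + 2 * ∑ y, mean μ fun ω =>
          if t * outputDist μ w y < w ω y then w ω y else 0 := by
  have letter (y : Y) :
      mean (iidLaw ι μ) (fun C => |codeOutput w (C ∘ f) y - outputDist μ w y|)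
        ≤ √(t / Fintype.card J) * outputDist μ w y
          + 2 * mean μ fun ω => if t * outputDist μ w y < w ω y then w ω y else 0 := by
    refine (hμ.mean_iid_abs_expect_sub_le_add_tail (fun ω => hw ω y)
      (mul_nonneg ht (hout.1 y)) f).trans_eq ?_
    congr 1
    rw [← outputDist, mul_assoc, mul_div_right_comm, ← sq, Real.sqrt_mul (by positivity),
      Real.sqrt_sq (hout.1 y)]
  calc mean (iidLaw ι μ) (fun C => l1Dist (codeOutput w (C ∘ f)) (outputDist μ w))
      = ∑ y, mean (iidLaw ι μ) (fun C => |codeOutput w (C ∘ f) y - outputDist μ w y|) :=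
        mean_sum _ _
    _ ≤ ∑ y, (√(t / Fintype.card J) * outputDist μ w y
          + 2 * mean μ fun ω => if t * outputDist μ w y < w ω y then w ω y else 0) :=
        Finset.sum_le_sum fun y _ => letter y
    _ = _ := by
        rw [Finset.sum_add_distrib, ← Finset.mul_sum, ← Finset.mul_sum, hout.2, mul_one]

end RandomCode

section LargeDeviations

lemma exists_mean_rpow_lt_one {Ω : Type} [Fintype Ω] {p r : Ω → ℝ} (hp : IsPMF p)
    (hr : ∀ ω, p ω ≠ 0 → 0 < r ω) (hlog : mean p (fun ω => Real.log (r ω)) < 0) :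
    ∃ ρ : ℝ, 0 < ρ ∧ mean p (fun ω => r ω ^ ρ) < 1 := by
  have deriv_zero : HasDerivAt (fun ρ : ℝ => mean p fun ω => r ω ^ ρ)
      (mean p fun ω => Real.log (r ω)) 0 := by
    refine HasDerivAt.fun_sum fun ω _ => ?_
    by_cases h : p ω = 0
    · simpa [h] using hasDerivAt_const (0 : ℝ) (0 : ℝ)
    · simpa using ((Real.hasStrictDerivAt_const_rpow (hr ω h) 0).hasDerivAt).const_mul (p ω)
  have at_zero : mean p (fun ω => r ω ^ (0 : ℝ)) = 1 := by
    simp only [Real.rpow_zero, hp.mean_const]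
  have slope_neg := (hasDerivAt_iff_tendsto_slope.1 deriv_zero).eventually (gt_mem_nhds hlog)
  obtain ⟨ρ, hρ, hρ0⟩ := ((slope_neg.filter_mono
    (nhdsGT_le_nhdsNE (0 : ℝ))).and self_mem_nhdsWithin).exists
  refine ⟨ρ, hρ0, ?_⟩
  rw [slope_def_field, at_zero, sub_zero, div_neg_iff] at hρ
  rcases hρ with h | h
  · exact absurd h.2 (not_lt.2 (le_of_lt hρ0))
  · linarith [h.1]

lemma IsPMF.mean_iid_one_le_prod_le_pow {Ω ι : Type} [Fintype Ω] [Fintype ι] [DecidableEq ι]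
    {p r : Ω → ℝ} (hp : IsPMF p) (hr : ∀ ω, 0 ≤ r ω) {ρ : ℝ} (hρ : 0 ≤ ρ) :
    mean (iidLaw ι p) (fun x => if 1 ≤ ∏ i, r (x i) then 1 else 0)
      ≤ mean p (fun ω => r ω ^ ρ) ^ Fintype.card ι := by
  have markov (x : ι → Ω) : (if 1 ≤ ∏ i, r (x i) then 1 else 0) ≤ ∏ i, r (x i) ^ ρ := by
    rw [Real.finsetProd_rpow _ _ fun i _ => hr (x i)]
    split_ifs with h
    · exact Real.one_le_rpow h hρ
    · exact Real.rpow_nonneg (Finset.prod_nonneg fun i _ => hr (x i)) ρ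
  refine (mean_mono hp.iid.1 markov).trans_eq ?_
  rw [mean_iid_prod p fun _ ω => r ω ^ ρ, Finset.prod_const, Finset.card_univ]

lemma IsPMF.exists_mean_iid_one_le_prod_le_pow {Ω : Type} [Fintype Ω] {p r : Ω → ℝ}
    (hp : IsPMF p) (hr : ∀ ω, 0 ≤ r ω) (hr_pos : ∀ ω, p ω ≠ 0 → 0 < r ω)
    (hlog : mean p (fun ω => Real.log (r ω)) < 0) :
    ∃ c ∈ Set.Ico (0 : ℝ) 1, ∀ n,
      mean (iidLaw (Fin n) p) (fun x => if 1 ≤ ∏ i, r (x i) then 1 else 0) ≤ c ^ n := by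
  obtain ⟨ρ, hρ, hlt⟩ := exists_mean_rpow_lt_one hp hr_pos hlog
  refine ⟨_, ⟨mean_nonneg hp.1 fun ω => Real.rpow_nonneg (hr ω) ρ, hlt⟩, fun n => ?_⟩
  simpa only [Fintype.card_fin] using hp.mean_iid_one_le_prod_le_pow (ι := Fin n) hr hρ.le

end LargeDeviations

section JointLaw

/-- The marginal of the first letter of the joint law `p`. -/
def fstLaw {α β : Type*} [Fintype β] (p : α → β → ℝ) (a : α) : ℝ := ∑ b, p a b

/-- The marginal of the second letter of the joint law `p`. -/
def sndLaw {α β : Type*} [Fintype α] (p : α → β → ℝ) (b : β) : ℝ := ∑ a, p a b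

/-- The conditional law of the second letter given the first under the joint law `p`. It vanishes
identically, instead of being a probability mass function, at letters of marginal probability
zero. -/
def condLaw {α β : Type*} [Fintype β] (p : α → β → ℝ) (a : α) (b : β) : ℝ := p a b / fstLaw p a

/-- The density of the joint law `p` with respect to the product of its marginals. -/
def jointDensity {α β : Type*} [Fintype α] [Fintype β] (p : α → β → ℝ) (x : α × β) : ℝ :=
  p x.1 x.2 / (fstLaw p x.1 * sndLaw p x.2)

/-- The channel between sequences that applies `w` to each letter independently. -/
def memoryless {α β ι : Type*} [Fintype ι] (w : α → β → ℝ) (u : ι → α) (y : ι → β) : ℝ :=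
  ∏ i, w (u i) (y i)

lemma outputDist_iidLaw_memoryless {α β ι : Type*} [Fintype α] [Fintype ι] [DecidableEq ι]
    (μ : α → ℝ) (w : α → β → ℝ) :
    outputDist (iidLaw ι μ) (memoryless w) = iidLaw ι (outputDist μ w) :=
  funext fun y => mean_iid_prod μ fun i a => w a (y i)

section FstLaw

variable {α β : Type*} [Fintype β] {p : α → β → ℝ}

lemma le_fstLaw (hp : ∀ a b, 0 ≤ p a b) (a : α) (b : β) : p a b ≤ fstLaw p a :=
  Finset.single_le_sum (fun b _ => hp a b) (Finset.mem_univ b)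

lemma condLaw_nonneg (hp : ∀ a b, 0 ≤ p a b) (a : α) (b : β) : 0 ≤ condLaw p a b :=
  div_nonneg (hp a b) (Finset.sum_nonneg fun b _ => hp a b)

lemma fstLaw_mul_condLaw (hp : ∀ a b, 0 ≤ p a b) (a : α) (b : β) :
    fstLaw p a * condLaw p a b = p a b :=
  mul_div_cancel_of_imp' fun h => le_antisymm (h ▸ le_fstLaw hp a b) (hp a b)

lemma iidLaw_fstLaw_mul_memoryless_condLaw {ι : Type*} [Fintype ι] (hp : ∀ a b, 0 ≤ p a b)
    (u : ι → α) (y : ι → β) :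
    iidLaw ι (fstLaw p) u * memoryless (condLaw p) u y = memoryless p u y := by
  simp only [iidLaw, memoryless, ← Finset.prod_mul_distrib, fstLaw_mul_condLaw hp]

end FstLaw

lemma le_sndLaw {α β : Type*} [Fintype α] {p : α → β → ℝ} (hp : ∀ a b, 0 ≤ p a b) (a : α)
    (b : β) : p a b ≤ sndLaw p b :=
  Finset.single_le_sum (fun a _ => hp a b) (Finset.mem_univ a)

section Density

variable {α β : Type*} [Fintype α] [Fintype β] {p : α → β → ℝ}

lemma outputDist_fstLaw_condLaw (hp : ∀ a b, 0 ≤ p a b) :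
    outputDist (fstLaw p) (condLaw p) = sndLaw p :=
  funext fun b => Finset.sum_congr rfl fun a _ => fstLaw_mul_condLaw hp a b

lemma jointDensity_nonneg (hp : ∀ a b, 0 ≤ p a b) (x : α × β) : 0 ≤ jointDensity p x :=
  div_nonneg (hp _ _) (mul_nonneg (Finset.sum_nonneg fun b _ => hp _ b)
    (Finset.sum_nonneg fun a _ => hp a _))

lemma jointDensity_pos (hp : ∀ a b, 0 ≤ p a b) {x : α × β} (hx : p x.1 x.2 ≠ 0) :
    0 < jointDensity p x := by
  have h := (hp x.1 x.2).lt_of_ne' hx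
  exact div_pos h (mul_pos (h.trans_le (le_fstLaw hp _ _)) (h.trans_le (le_sndLaw hp _ _)))

lemma mean_iidLaw_uncurry {ι : Type*} [Fintype ι] [DecidableEq ι] (p : α → β → ℝ)
    (g : (ι → α × β) → ℝ) :
    mean (iidLaw ι (Function.uncurry p)) g
      = ∑ y, ∑ u, memoryless p u y * g fun i => (u i, y i) := by
  rw [← Fintype.sum_prod_type_right fun z : (ι → α) × (ι → β) =>
    memoryless p z.1 z.2 * g fun i => (z.1 i, z.2 i)]
  exact Fintype.sum_equiv (Equiv.arrowProdEquivProdArrow ι (fun _ => α) fun _ => β) _ _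
    fun x => rfl

/- On the support of the joint law, an excess of the conditional probability over `t ^ n` times the
output probability says that the density exceeds `t ^ n`. -/
lemma sum_mean_iid_condLaw_tail_le (hp : ∀ a b, 0 ≤ p a b) {ι : Type*} [Fintype ι]
    [DecidableEq ι] {t : ℝ} (ht : 0 < t) :
    ∑ y, mean (iidLaw ι (fstLaw p)) (fun u =>
        if t ^ Fintype.card ι * iidLaw ι (sndLaw p) y < memoryless (condLaw p) u y
          then memoryless (condLaw p) u y else 0)
      ≤ mean (iidLaw ι (Function.uncurry p)) fun x =>
          if 1 ≤ ∏ i, jointDensity p (x i) / t then 1 else 0 := by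
  have density (u : ι → α) (y : ι → β) (hy : 0 < iidLaw ι (sndLaw p) y)
      (h : t ^ Fintype.card ι * iidLaw ι (sndLaw p) y < memoryless (condLaw p) u y) :
      1 ≤ ∏ i, jointDensity p (u i, y i) / t := by
    have factor : ∏ i, jointDensity p (u i, y i) / t
        = memoryless (condLaw p) u y / (t ^ Fintype.card ι * iidLaw ι (sndLaw p) y) := by
      simp only [memoryless, iidLaw, condLaw, jointDensity, ← div_div, Finset.prod_div_distrib,
        Finset.prod_const, Finset.card_univ]
      exact div_right_comm _ _ _
    rw [factor, one_le_div (by positivity)]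
    exact h.le
  have pointwise (u : ι → α) (y : ι → β) :
      iidLaw ι (fstLaw p) u * (if t ^ Fintype.card ι * iidLaw ι (sndLaw p) y
            < memoryless (condLaw p) u y then memoryless (condLaw p) u y else 0)
        ≤ memoryless p u y * if 1 ≤ ∏ i, jointDensity p (u i, y i) / t then 1 else 0 := by
    have joint_nonneg : 0 ≤ memoryless p u y := Finset.prod_nonneg fun i _ => hp _ _
    rcases joint_nonneg.eq_or_lt with hzero | hpos
    · rw [mul_ite, iidLaw_fstLaw_mul_memoryless_condLaw hp, ← hzero, mul_zero, ite_self, zero_mul]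
    · have output_pos : 0 < iidLaw ι (sndLaw p) y :=
        hpos.trans_le (Finset.prod_le_prod (fun i _ => hp _ _) fun i _ => le_sndLaw hp _ _)
      split_ifs with h hd hd
      · rw [iidLaw_fstLaw_mul_memoryless_condLaw hp, mul_one]
      · exact absurd (density u y output_pos h) hd
      · simpa using joint_nonneg
      · simp
  rw [mean_iidLaw_uncurry]
  exact Finset.sum_le_sum fun y _ => Finset.sum_le_sum fun u _ => pointwise u y

end Density

section CoveringExponent

variable {α β : Type} [Fintype α] [Fintype β] {p : α → β → ℝ}

lemma isPMF_fstLaw (hp : IsPMF (Function.uncurry p)) : IsPMF (fstLaw p) :=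
  ⟨fun a => Finset.sum_nonneg fun b _ => hp.1 (a, b), (Fintype.sum_prod_type _).symm.trans hp.2⟩

lemma isPMF_sndLaw (hp : IsPMF (Function.uncurry p)) : IsPMF (sndLaw p) :=
  ⟨fun b => Finset.sum_nonneg fun a _ => hp.1 (a, b),
    (Fintype.sum_prod_type_right _).symm.trans hp.2⟩

lemma mean_log_jointDensity_div (hp : IsPMF (Function.uncurry p)) {t : ℝ} (ht : 0 < t) :
    mean (Function.uncurry p) (fun x => Real.log (jointDensity p x / t))
      = Real.log 2 * (mutualInfo p - Real.logb 2 t) := by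
  have letter (x : α × β) : Function.uncurry p x * Real.log (jointDensity p x / t)
      = Real.log 2 * (Function.uncurry p x * Real.logb 2 (jointDensity p x))
        - Function.uncurry p x * Real.log t := by
    by_cases hx : p x.1 x.2 = 0
    · simp [Function.uncurry, hx]
    · rw [Real.log_div (jointDensity_pos (p := p) (fun a b => hp.1 (a, b)) hx).ne' ht.ne',
        ← Real.log_div_log]
      field_simp
  have info : mutualInfo p = ∑ x, Function.uncurry p x * Real.logb 2 (jointDensity p x) :=
    (Fintype.sum_prod_type fun x => Function.uncurry p x * Real.logb 2 (jointDensity p x)).symm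
  rw [mean, Finset.sum_congr rfl fun x _ => letter x, Finset.sum_sub_distrib, ← Finset.mul_sum,
    ← Finset.sum_mul, hp.2, ← info, ← Real.log_div_log]
  field_simp

lemma exists_sum_mean_iid_condLaw_tail_le_pow (hp : IsPMF (Function.uncurry p)) {t : ℝ}
    (ht : 0 < t) (hI : mutualInfo p < Real.logb 2 t) :
    ∃ c ∈ Set.Ico (0 : ℝ) 1, ∀ n,
      ∑ y, mean (iidLaw (Fin n) (fstLaw p)) (fun u =>
        if t ^ n * iidLaw (Fin n) (sndLaw p) y < memoryless (condLaw p) u y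
          then memoryless (condLaw p) u y else 0) ≤ c ^ n := by
  have nonneg (a : α) (b : β) : 0 ≤ p a b := hp.1 (a, b)
  have log_neg : mean (Function.uncurry p) (fun x => Real.log (jointDensity p x / t)) < 0 := by
    rw [mean_log_jointDensity_div hp ht]
    exact mul_neg_of_pos_of_neg (Real.log_pos one_lt_two) (sub_neg.2 hI)
  obtain ⟨c, hc, h⟩ := hp.exists_mean_iid_one_le_prod_le_pow
    (fun x => div_nonneg (jointDensity_nonneg nonneg x) ht.le)
    (fun x hx => div_pos (jointDensity_pos nonneg hx) ht) log_neg
  refine ⟨c, hc, fun n => le_trans ?_ (h n)⟩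
  simpa only [Fintype.card_fin] using sum_mean_iid_condLaw_tail_le (ι := Fin n) nonneg ht

theorem exists_mean_l1Dist_codeOutput_le_pow (hp : IsPMF (Function.uncurry p)) {R : ℝ}
    (hR : mutualInfo p < R) :
    ∃ c ∈ Set.Ico (0 : ℝ) 1, ∀ (n : ℕ) {ι J : Type} [Fintype ι] [DecidableEq ι] [Fintype J]
      (f : J ↪ ι), (2 : ℝ) ^ (n * R) ≤ Fintype.card J →
        mean (iidLaw ι (iidLaw (Fin n) (fstLaw p))) (fun C =>
          l1Dist (codeOutput (memoryless (condLaw p)) (C ∘ f)) (iidLaw (Fin n) (sndLaw p)))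
            ≤ 3 * c ^ n := by
  have nonneg (a : α) (b : β) : 0 ≤ p a b := hp.1 (a, b)
  obtain ⟨R₀, hIR₀, hR₀R⟩ := exists_between hR
  set t : ℝ := 2 ^ R₀
  have ht : 0 < t := by positivity
  obtain ⟨b, hb, tail⟩ := exists_sum_mean_iid_condLaw_tail_le_pow hp ht
    (by rwa [Real.logb_rpow two_pos (by norm_num)])
  set d : ℝ := √(t / 2 ^ R)
  have hd : d < 1 := by
    rw [Real.sqrt_lt' one_pos, one_pow, div_lt_one (by positivity)]
    exact Real.rpow_lt_rpow_of_exponent_lt one_lt_two hR₀R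
  refine ⟨max b d, ⟨le_max_of_le_left hb.1, max_lt hb.2 hd⟩, fun n ι J _ _ _ f hcard => ?_⟩
  have : Nonempty J := Fintype.card_pos_iff.1 (by
    exact_mod_cast (by positivity : (0 : ℝ) < 2 ^ (n * R)).trans_le hcard)
  have bulk : √(t ^ n / Fintype.card J) ≤ d ^ n := by
    rw [mul_comm, Real.rpow_mul_natCast two_pos.le] at hcard
    refine Real.sqrt_le_iff.2 ⟨by positivity, ?_⟩
    rw [← pow_mul, mul_comm n, pow_mul, Real.sq_sqrt (by positivity), div_pow]
    gcongr
  have output : outputDist (iidLaw (Fin n) (fstLaw p)) (memoryless (condLaw p))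
      = iidLaw (Fin n) (sndLaw p) := by
    rw [outputDist_iidLaw_memoryless, outputDist_fstLaw_condLaw nonneg]
  have covering := (isPMF_fstLaw hp).iid.mean_l1Dist_codeOutput_le
    (w := memoryless (condLaw p))
    (fun u y => Finset.prod_nonneg fun i _ => condLaw_nonneg nonneg _ _)
    (output ▸ (isPMF_sndLaw hp).iid) (pow_nonneg ht.le n) f
  rw [output] at covering
  calc _ ≤ _ := covering
    _ ≤ d ^ n + 2 * b ^ n := by gcongr; exact tail n
    _ ≤ max b d ^ n + 2 * max b d ^ n := by
        gcongr
        exacts [le_max_right b d, hb.1, le_max_left b d]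
    _ = 3 * max b d ^ n := by ring

end CoveringExponent

end JointLaw

section Divergence

lemma abs_mul_log_le {x B : ℝ} (hx : 0 ≤ x) (hxB : x ≤ B) (hB : 1 ≤ B) :
    |x * Real.log x| ≤ (1 + Real.log B) * |x - 1| := by
  have hlogB : 0 ≤ Real.log B := Real.log_nonneg hB
  rcases le_total x 1 with h | h
  · calc |x * Real.log x| = -(x * Real.log x) := abs_of_nonpos (Real.mul_log_nonpos hx h)
      _ ≤ |x - 1| := by
        rw [abs_of_nonpos (by linarith)]
        linarith [Real.self_sub_one_le_mul_log hx]
      _ ≤ (1 + Real.log B) * |x - 1| := le_mul_of_one_le_left (abs_nonneg _) (by linarith)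
  · calc |x * Real.log x| = Real.log x + Real.log x * (x - 1) := by
          rw [abs_of_nonneg (Real.mul_log_nonneg h)]; ring
      _ ≤ (x - 1) + Real.log B * (x - 1) := by
        gcongr
        exact Real.log_le_sub_one_of_pos (by linarith)
      _ = (1 + Real.log B) * |x - 1| := by rw [abs_of_nonneg (by linarith)]; ring

lemma abs_klDiv_le {Y : Type} [Fintype Y] {p q : Y → ℝ} (hp : ∀ y, 0 ≤ p y) (hq : ∀ y, 0 ≤ q y)
    {B : ℝ} (hB : 1 ≤ B) (hpq : ∀ y, p y ≤ B * q y) :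
    |klDiv p q| ≤ (1 + Real.log B) / Real.log 2 * l1Dist p q := by
  have hlog2 : 0 < Real.log 2 := Real.log_pos one_lt_two
  have letter (y : Y) : |p y * Real.log (p y / q y)| ≤ (1 + Real.log B) * |p y - q y| := by
    rcases (hq y).eq_or_lt with hzero | hpos
    · have : p y = 0 := le_antisymm (by simpa [← hzero] using hpq y) (hp y)
      simp [this, ← hzero]
    · have hratio : 0 ≤ p y / q y := div_nonneg (hp y) hpos.le
      calc |p y * Real.log (p y / q y)| = q y * |p y / q y * Real.log (p y / q y)| := by
            rw [abs_mul, abs_mul, abs_of_nonneg (hp y), abs_of_nonneg hratio, ← mul_assoc,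
              mul_div_cancel₀ _ hpos.ne']
        _ ≤ q y * ((1 + Real.log B) * |p y / q y - 1|) := by
            gcongr
            exact abs_mul_log_le hratio ((div_le_iff₀ hpos).2 (hpq y)) hB
        _ = (1 + Real.log B) * |p y - q y| := by
            rw [div_sub_one hpos.ne', abs_div, abs_of_pos hpos, mul_left_comm,
              mul_div_cancel₀ _ hpos.ne']
  calc |klDiv p q| ≤ ∑ y, |p y * Real.logb 2 (p y / q y)| := Finset.abs_sum_le_sum_abs _ _
    _ ≤ ∑ y, (1 + Real.log B) / Real.log 2 * |p y - q y| := by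
        refine Finset.sum_le_sum fun y _ => ?_
        rw [← Real.log_div_log, ← mul_div_assoc, abs_div, abs_of_pos hlog2, div_mul_eq_mul_div]
        gcongr
        exact letter y
    _ = _ := (Finset.mul_sum _ _ _).symm

end Divergence

section LikelihoodEncoder

/-- The law of the triple `(j, s, l)` produced by the likelihood encoder: the message `j` is
uniform, the state `s` has law `P`, and `l` is drawn with probability proportional to the likelihood
`w (c j l) s` of the state. Pairs `(j, s)` for which all likelihoods vanish receive no mass. -/
def encoderLaw {Ω S J Λ : Type*} [Fintype J] [Fintype Λ] (P : S → ℝ) (w : Ω → S → ℝ)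
    (c : J → Λ → Ω) (x : J × S × Λ) : ℝ :=
  (Fintype.card J : ℝ)⁻¹ * (P x.2.1 * (w (c x.1 x.2.2) x.2.1 / ∑ l, w (c x.1 l) x.2.1))

/-- The idealized law of `(j, s, l)` in which `j` and `l` are uniform and the state is the output of
the channel `w` driven by the codeword `c j l`. -/
def idealLaw {Ω S J Λ : Type*} [Fintype J] [Fintype Λ] (w : Ω → S → ℝ) (c : J → Λ → Ω)
    (x : J × S × Λ) : ℝ :=
  (Fintype.card J : ℝ)⁻¹ * ((Fintype.card Λ : ℝ)⁻¹ * w (c x.1 x.2.2) x.2.1)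

/-- The output distribution of the state-dependent channel `V` when its input and its state are
produced by the likelihood encoder. -/
def encoderOutput {Ω S J Λ Y : Type*} [Fintype S] [Fintype J] [Fintype Λ] (P : S → ℝ)
    (w : Ω → S → ℝ) (V : Ω → S → Y → ℝ) (c : J → Λ → Ω) : Y → ℝ :=
  outputDist (encoderLaw P w c) fun x => V (c x.1 x.2.2) x.2.1

lemma sum_abs_mul_div_sum_sub_le {Λ : Type*} [Fintype Λ] {a : Λ → ℝ} (ha : ∀ l, 0 ≤ a l)
    (P : ℝ) :
    ∑ l, |P * (a l / ∑ l', a l') - (Fintype.card Λ : ℝ)⁻¹ * a l| ≤ |𝔼 l, a l - P| := by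
  rcases (Finset.sum_nonneg fun l _ => ha l).eq_or_lt with hzero | hpos
  · have (l : Λ) : a l = 0 :=
      (Finset.sum_eq_zero_iff_of_nonneg fun l _ => ha l).1 hzero.symm l (Finset.mem_univ l)
    simp [this]
  · have letter (l : Λ) : |P * (a l / ∑ l', a l') - (Fintype.card Λ : ℝ)⁻¹ * a l|
        = a l * (|𝔼 l, a l - P| / ∑ l', a l') := calc
      _ = |a l / (∑ l', a l') * (P - 𝔼 l, a l)| := by
        rw [Fintype.expect_eq_sum_div_card]; congr 1; field_simp
      _ = a l * (|𝔼 l, a l - P| / ∑ l', a l') := by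
        rw [abs_mul, abs_of_nonneg (div_nonneg (ha l) hpos.le), abs_sub_comm, div_mul_comm,
          mul_comm]
    rw [Finset.sum_congr rfl fun l _ => letter l, ← Finset.sum_mul, mul_div_cancel₀ _ hpos.ne']

lemma encoderLaw_nonneg {Ω S J Λ : Type*} [Fintype J] [Fintype Λ] {P : S → ℝ} {w : Ω → S → ℝ}
    (hP : ∀ s, 0 ≤ P s) (hw : ∀ u s, 0 ≤ w u s) (c : J → Λ → Ω) (x : J × S × Λ) :
    0 ≤ encoderLaw P w c x :=
  mul_nonneg (by positivity) (mul_nonneg (hP _)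
    (div_nonneg (hw _ _) (Finset.sum_nonneg fun _ _ => hw _ _)))

variable {Ω S J Λ Y : Type} [Fintype S] [Fintype J] [Fintype Λ] {P : S → ℝ}
  {w : Ω → S → ℝ}

lemma sum_encoderLaw_le_one (hP : IsPMF P) (w : Ω → S → ℝ) (c : J → Λ → Ω) :
    ∑ x, encoderLaw P w c x ≤ 1 := by
  simp only [encoderLaw, Fintype.sum_prod_type, ← Finset.mul_sum, ← Finset.sum_div]
  calc (Fintype.card J : ℝ)⁻¹ * ∑ j, ∑ s, P s * ((∑ l, w (c j l) s) / ∑ l, w (c j l) s)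
      ≤ (Fintype.card J : ℝ)⁻¹ * ∑ _j : J, ∑ s, P s := by
        gcongr with j _ s
        exact mul_le_of_le_one_right (hP.1 s) (div_self_le_one _)
    _ ≤ 1 := by
        rw [hP.2, Finset.sum_const, Finset.card_univ, nsmul_one]
        exact inv_mul_le_one

lemma l1Dist_encoderLaw_idealLaw_le (P : S → ℝ) (hw : ∀ u s, 0 ≤ w u s) (c : J → Λ → Ω) :
    l1Dist (encoderLaw P w c) (idealLaw w c) ≤ 𝔼 j, l1Dist (codeOutput w (c j)) P := by
  simp only [l1Dist, encoderLaw, idealLaw, Fintype.sum_prod_type, ← mul_sub, abs_mul,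
    ← Finset.mul_sum, Fintype.expect_eq_sum_div_card, div_eq_inv_mul (∑ _ : J, _)]
  rw [abs_of_nonneg (by positivity)]
  gcongr with j _ s
  exact sum_abs_mul_div_sum_sub_le (fun l => hw (c j l) s) (P s)

lemma outputDist_idealLaw (w : Ω → S → ℝ) (V : Ω → S → Y → ℝ) (c : J → Λ → Ω) :
    (outputDist (idealLaw w c) fun x => V (c x.1 x.2.2) x.2.1)
      = codeOutput (fun u => outputDist (w u) (V u)) (Function.uncurry c) := by
  funext y
  simp only [outputDist, mean, idealLaw, codeOutput, Fintype.sum_prod_type,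
    Fintype.expect_eq_sum_div_card, Function.uncurry, mul_assoc, ← Finset.mul_sum,
    Fintype.card_prod, Nat.cast_mul, div_eq_inv_mul, mul_inv]
  congr! 3
  exact Finset.sum_comm

lemma encoderOutput_eq_zero {V : Ω → S → Y → ℝ} (hw : ∀ u s, 0 ≤ w u s) {y : Y}
    (hV : ∀ u s, 0 ≤ V u s y) (hy : ∀ u, outputDist (w u) (V u) y = 0) (P : S → ℝ)
    (c : J → Λ → Ω) : encoderOutput P w V c y = 0 := by
  have factor_zero (u : Ω) (s : S) : w u s * V u s y = 0 :=
    (Finset.sum_eq_zero_iff_of_nonneg fun s _ => mul_nonneg (hw u s) (hV u s)).1 (hy u) s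
      (Finset.mem_univ s)
  refine Finset.sum_eq_zero fun x _ => ?_
  simp only [encoderLaw, mul_assoc, div_mul_eq_mul_div, factor_zero, zero_div, mul_zero]

variable [Fintype Y] {V : Ω → S → Y → ℝ}

lemma encoderOutput_le_one (hP : IsPMF P) (hw : ∀ u s, 0 ≤ w u s) (hV : ∀ u s, IsPMF (V u s))
    (c : J → Λ → Ω) (y : Y) : encoderOutput P w V c y ≤ 1 :=
  calc encoderOutput P w V c y ≤ ∑ x, encoderLaw P w c x * 1 :=
        mean_mono (encoderLaw_nonneg hP.1 hw c) fun _ => (hV _ _).le_one y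
    _ ≤ 1 := by simpa only [mul_one] using sum_encoderLaw_le_one hP w c

lemma l1Dist_encoderOutput_le (P : S → ℝ) (hw : ∀ u s, 0 ≤ w u s) (hV : ∀ u s, IsPMF (V u s))
    (c : J → Λ → Ω) (q : Y → ℝ) :
    l1Dist (encoderOutput P w V c) q ≤ 𝔼 j, l1Dist (codeOutput w (c j)) P
      + l1Dist (codeOutput (fun u => outputDist (w u) (V u)) (Function.uncurry c)) q := by
  rw [← outputDist_idealLaw]
  refine (l1Dist_triangle _ (outputDist (idealLaw w c) fun x => V (c x.1 x.2.2) x.2.1) _).trans ?_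
  gcongr
  exact (l1Dist_outputDist_le _ _ fun x => hV _ _).trans (l1Dist_encoderLaw_idealLaw_le P hw c)

end LikelihoodEncoder

section SingleLetter

/-- The joint law `P_{U,S}`. -/
def jointUS (PS : 𝒮 → ℝ) (pU : 𝒮 → 𝒰 → ℝ) (u : 𝒰) (s : 𝒮) : ℝ := PS s * pU s u

/-- The joint law `P_{U,Z}`. -/
def jointUZ (PS : 𝒮 → ℝ) (pU : 𝒮 → 𝒰 → ℝ) (W : 𝒰 → 𝒮 → 𝒵 → ℝ) (u : 𝒰) (z : 𝒵) : ℝ :=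
  ∑ s, PS s * pU s u * W u s z

variable {PS : 𝒮 → ℝ} {pU : 𝒮 → 𝒰 → ℝ} {W : 𝒰 → 𝒮 → 𝒵 → ℝ}

omit [Fintype 𝒮] in
lemma sndLaw_jointUS (hpU : ∀ s, IsPMF (pU s)) : sndLaw (jointUS PS pU) = PS := by
  funext s
  simp only [sndLaw, jointUS, ← Finset.mul_sum, (hpU s).2, mul_one]

omit [Fintype 𝒰] in
lemma fstLaw_jointUZ (hW : ∀ u s, IsPMF (W u s)) : fstLaw (jointUZ PS pU W) = PU PS pU := by
  funext u
  simp only [fstLaw, jointUZ, PU]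
  rw [Finset.sum_comm]
  simp only [← Finset.mul_sum, (hW u _).2, mul_one]

lemma isPMF_jointUS (hPS : IsPMF PS) (hpU : ∀ s, IsPMF (pU s)) :
    IsPMF (Function.uncurry (jointUS PS pU)) :=
  ⟨fun x => mul_nonneg (hPS.1 _) ((hpU _).1 _),
    calc ∑ x, Function.uncurry (jointUS PS pU) x = ∑ s, sndLaw (jointUS PS pU) s :=
          Fintype.sum_prod_type_right _
      _ = 1 := by rw [sndLaw_jointUS hpU, hPS.2]⟩

lemma isPMF_jointUZ (hPS : IsPMF PS) (hpU : ∀ s, IsPMF (pU s)) (hW : ∀ u s, IsPMF (W u s)) :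
    IsPMF (Function.uncurry (jointUZ PS pU W)) :=
  ⟨fun x => Finset.sum_nonneg fun s _ =>
      mul_nonneg (mul_nonneg (hPS.1 s) ((hpU s).1 _)) ((hW _ s).1 _),
    calc ∑ x, Function.uncurry (jointUZ PS pU W) x = ∑ u, fstLaw (jointUZ PS pU W) u :=
          Fintype.sum_prod_type _
      _ = ∑ u, fstLaw (jointUS PS pU) u := by rw [fstLaw_jointUZ hW]; rfl
      _ = 1 := (isPMF_fstLaw (isPMF_jointUS hPS hpU)).2⟩

omit [Fintype 𝒰] in
lemma outputDist_condLaw_jointUS (hW : ∀ u s, IsPMF (W u s)) (u : 𝒰) :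
    outputDist (condLaw (jointUS PS pU) u) (W u) = condLaw (jointUZ PS pU W) u := by
  funext z
  rw [condLaw, fstLaw_jointUZ hW, jointUZ, Finset.sum_div]
  exact Finset.sum_congr rfl fun s _ => div_mul_eq_mul_div _ _ _

end SingleLetter

section Blocklength

lemma outputDist_memoryless {Ω S Y ι : Type*} [Fintype S] [Fintype ι] [DecidableEq ι]
    (w : Ω → S → ℝ) (V : Ω → S → Y → ℝ) (u : ι → Ω) :
    (outputDist (memoryless w u) fun s y => ∏ i, V (u i) (s i) (y i))
      = memoryless (fun a => outputDist (w a) (V a)) u :=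
  funext fun y => mean_pi_prod (fun i => w (u i)) fun i s => V (u i) s (y i)

lemma exists_one_le_pow_mul_iidLaw {Y : Type*} [Finite Y] {q : Y → ℝ} (hq : ∀ y, 0 ≤ q y) :
    ∃ b, 1 ≤ b ∧ ∀ (n : ℕ) (y : Fin n → Y),
      iidLaw (Fin n) q y ≠ 0 → 1 ≤ b ^ n * iidLaw (Fin n) q y := by
  have := Fintype.ofFinite Y
  have inv_nonneg (y : Y) : 0 ≤ (q y)⁻¹ := inv_nonneg.2 (hq y)
  refine ⟨1 + ∑ y, (q y)⁻¹, le_add_of_nonneg_right (Finset.sum_nonneg fun y _ => inv_nonneg y),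
    fun n y hy => ?_⟩
  have letter (i : Fin n) : 1 ≤ (1 + ∑ y, (q y)⁻¹) * q (y i) := by
    have hpos : 0 < q (y i) := (hq _).lt_of_ne' (Finset.prod_ne_zero_iff.1 hy i (Finset.mem_univ i))
    rw [← div_le_iff₀ hpos, one_div]
    exact le_add_of_nonneg_of_le zero_le_one
      (Finset.single_le_sum (fun y _ => inv_nonneg y) (Finset.mem_univ (y i)))
  calc 1 = ∏ _i : Fin n, (1 : ℝ) := Finset.prod_const_one.symm
    _ ≤ ∏ i, (1 + ∑ y, (q y)⁻¹) * q (y i) :=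
        Finset.prod_le_prod (fun _ _ => zero_le_one) fun i _ => letter i
    _ = _ := by rw [Finset.prod_mul_distrib, Finset.prod_const, Finset.card_fin, iidLaw]

variable {PS : 𝒮 → ℝ} {pU : 𝒮 → 𝒰 → ℝ} {W : 𝒰 → 𝒮 → 𝒵 → ℝ} {n K M L : ℕ}

omit [Fintype 𝒰] [Fintype 𝒵] in
/- The key `k` and the message `m` together are the message of the likelihood encoder. -/
lemma PhatZ_eq_encoderOutput (C : Codebook 𝒰 n K M L) :
    PhatZ PS pU W C = encoderOutput (iidLaw (Fin n) PS) (memoryless (condLaw (jointUS PS pU)))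
      (fun u s z => ∏ i, W (u i) (s i) (z i)) fun (j : Fin K × Fin M) l => C (j.1, j.2, l) := by
  funext z
  simp only [PhatZ, encoderOutput, outputDist, mean, encoderLaw, Fintype.sum_prod_type,
    Fintype.card_prod, Fintype.card_fin, Nat.cast_mul, mul_inv, mul_assoc]
  rfl

omit [Fintype 𝒰] [Fintype 𝒮] in
lemma isPMF_prod_channel (hW : ∀ u s, IsPMF (W u s)) (u : Fin n → 𝒰) (s : Fin n → 𝒮) :
    IsPMF fun z : Fin n → 𝒵 => ∏ i, W (u i) (s i) (z i) :=
  IsPMF.pi fun i => hW (u i) (s i)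

omit [Fintype 𝒵] in
lemma memoryless_condLaw_jointUS_nonneg (hPS : IsPMF PS) (hpU : ∀ s, IsPMF (pU s))
    (u : Fin n → 𝒰) (s : Fin n → 𝒮) : 0 ≤ memoryless (condLaw (jointUS PS pU)) u s :=
  Finset.prod_nonneg fun _ _ => condLaw_nonneg (fun u s => (isPMF_jointUS hPS hpU).1 (u, s)) _ _

omit [Fintype 𝒰] in
lemma outputDist_memoryless_condLaw_jointUS (hW : ∀ u s, IsPMF (W u s)) (u : Fin n → 𝒰) :
    (outputDist (memoryless (condLaw (jointUS PS pU)) u) fun s z => ∏ i, W (u i) (s i) (z i))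
      = memoryless (condLaw (jointUZ PS pU W)) u := by
  rw [outputDist_memoryless, funext (outputDist_condLaw_jointUS hW)]

lemma PhatZ_nonneg (hPS : IsPMF PS) (hpU : ∀ s, IsPMF (pU s)) (hW : ∀ u s, IsPMF (W u s))
    (C : Codebook 𝒰 n K M L) (z : Fin n → 𝒵) : 0 ≤ PhatZ PS pU W C z := by
  rw [PhatZ_eq_encoderOutput]
  exact mean_nonneg (encoderLaw_nonneg hPS.iid.1 (memoryless_condLaw_jointUS_nonneg hPS hpU) _)
    fun _ => (isPMF_prod_channel hW _ _).1 z

lemma PhatZ_eq_zero (hPS : IsPMF PS) (hpU : ∀ s, IsPMF (pU s)) (hW : ∀ u s, IsPMF (W u s))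
    {z : Fin n → 𝒵} (hz : iidLaw (Fin n) (PZ PS pU W) z = 0) (C : Codebook 𝒰 n K M L) :
    PhatZ PS pU W C z = 0 := by
  obtain ⟨i, -, hi⟩ := Finset.prod_eq_zero_iff.1 hz
  have nonneg (u : 𝒰) (z : 𝒵) : 0 ≤ jointUZ PS pU W u z := (isPMF_jointUZ hPS hpU hW).1 (u, z)
  have cond_zero (u : 𝒰) : condLaw (jointUZ PS pU W) u (z i) = 0 := by
    rw [condLaw, le_antisymm ((le_sndLaw nonneg u (z i)).trans_eq hi) (nonneg _ _), zero_div]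
  rw [PhatZ_eq_encoderOutput]
  refine encoderOutput_eq_zero (memoryless_condLaw_jointUS_nonneg hPS hpU)
    (fun u s => (isPMF_prod_channel hW u s).1 z) (fun u => ?_) _ _
  rw [outputDist_memoryless_condLaw_jointUS hW]
  exact Finset.prod_eq_zero (Finset.mem_univ i) (cond_zero (u i))

lemma PhatZ_le_one (hPS : IsPMF PS) (hpU : ∀ s, IsPMF (pU s)) (hW : ∀ u s, IsPMF (W u s))
    (C : Codebook 𝒰 n K M L) (z : Fin n → 𝒵) : PhatZ PS pU W C z ≤ 1 := by
  rw [PhatZ_eq_encoderOutput]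
  exact encoderOutput_le_one hPS.iid (memoryless_condLaw_jointUS_nonneg hPS hpU)
    (isPMF_prod_channel hW) _ z

lemma exists_PhatZ_le_pow_mul (hPS : IsPMF PS) (hpU : ∀ s, IsPMF (pU s))
    (hW : ∀ u s, IsPMF (W u s)) :
    ∃ b, 1 ≤ b ∧ ∀ (n K M L : ℕ) (C : Codebook 𝒰 n K M L) (z : Fin n → 𝒵),
      PhatZ PS pU W C z ≤ b ^ n * iidLaw (Fin n) (PZ PS pU W) z := by
  obtain ⟨b, hb, h⟩ := exists_one_le_pow_mul_iidLaw (isPMF_sndLaw (isPMF_jointUZ hPS hpU hW)).1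
  refine ⟨b, hb, fun n K M L C z => ?_⟩
  by_cases hz : iidLaw (Fin n) (PZ PS pU W) z = 0
  · rw [PhatZ_eq_zero hPS hpU hW hz, hz, mul_zero]
  · exact (PhatZ_le_one hPS hpU hW C z).trans (h n z hz)

end Blocklength

section SoftCoveringLimit

variable {PS : 𝒮 → ℝ} {pU : 𝒮 → 𝒰 → ℝ} {W : 𝒰 → 𝒮 → 𝒵 → ℝ} {R R' : ℝ}

lemma l1Dist_PhatZ_le (hPS : IsPMF PS) (hpU : ∀ s, IsPMF (pU s)) (hW : ∀ u s, IsPMF (W u s))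
    {n K M L : ℕ} (C : Codebook 𝒰 n K M L) (q : (Fin n → 𝒵) → ℝ) :
    l1Dist (PhatZ PS pU W C) q
      ≤ 𝔼 j : Fin K × Fin M, l1Dist
            (codeOutput (memoryless (condLaw (jointUS PS pU))) fun l => C (j.1, j.2, l))
            (iidLaw (Fin n) PS)
        + l1Dist (codeOutput (memoryless (condLaw (jointUZ PS pU W)))
            (C ∘ Equiv.prodAssoc (Fin K) (Fin M) (Fin L))) q := by
  rw [PhatZ_eq_encoderOutput, ← funext (outputDist_memoryless_condLaw_jointUS hW)]
  exact l1Dist_encoderOutput_le _ (memoryless_condLaw_jointUS_nonneg hPS hpU)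
    (isPMF_prod_channel hW) _ q

lemma exists_mean_l1Dist_PhatZ_le_pow (hPS : IsPMF PS) (hpU : ∀ s, IsPMF (pU s))
    (hW : ∀ u s, IsPMF (W u s))
    (hR' : mutualInfo (jointUS PS pU) < R') (hR : mutualInfo (jointUZ PS pU W) < R) :
    ∃ c ∈ Set.Ico (0 : ℝ) 1, ∀ n K M L : ℕ,
      (2 : ℝ) ^ (n * R') ≤ L → (2 : ℝ) ^ (n * R) ≤ K * M * L →
        mean (iidLaw _ (iidLaw (Fin n) (PU PS pU))) (fun C : Codebook 𝒰 n K M L =>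
          l1Dist (PhatZ PS pU W C) (iidLaw (Fin n) (PZ PS pU W))) ≤ 6 * c ^ n := by
  obtain ⟨a, ha, state⟩ := exists_mean_l1Dist_codeOutput_le_pow (isPMF_jointUS hPS hpU) hR'
  obtain ⟨b, hb, output⟩ := exists_mean_l1Dist_codeOutput_le_pow (isPMF_jointUZ hPS hpU hW) hR
  rw [sndLaw_jointUS hpU] at state
  rw [fstLaw_jointUZ hW] at output
  refine ⟨max a b, ⟨le_max_of_le_left ha.1, max_lt ha.2 hb.2⟩, fun n K M L hL hKML => ?_⟩
  have state_term (j : Fin K × Fin M) :=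
    state n ((Function.Embedding.sectR j.2 (Fin L)).trans (Function.Embedding.sectR j.1 _))
      (by rwa [Fintype.card_fin])
  have output_term := output n (Equiv.prodAssoc (Fin K) (Fin M) (Fin L)).toEmbedding
    (by simpa using hKML)
  have codebook_nonneg : ∀ C : Codebook 𝒰 n K M L, 0 ≤ iidLaw _ (iidLaw (Fin n) (PU PS pU)) C :=
    (isPMF_fstLaw (isPMF_jointUS hPS hpU)).iid.iid.1
  refine (mean_mono codebook_nonneg fun C => l1Dist_PhatZ_le hPS hpU hW C _).trans ?_
  rw [mean_add, mean_expect]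
  have card_pos : 0 < K * M * L := by
    exact_mod_cast (by positivity : (0 : ℝ) < 2 ^ (n * R)).trans_le hKML
  have : Nonempty (Fin K × Fin M) :=
    Fintype.card_pos_iff.1 (by simpa using Nat.pos_of_mul_pos_right card_pos)
  calc _ ≤ 3 * a ^ n + 3 * b ^ n :=
        add_le_add (Finset.expect_le Finset.univ_nonempty fun j _ => state_term j) output_term
    _ ≤ 3 * max a b ^ n + 3 * max a b ^ n := by
        gcongr
        exacts [ha.1, le_max_left a b, hb.1, le_max_right a b]
    _ = 6 * max a b ^ n := by ring

lemma exists_abs_expDiv_le [DecidableEq 𝒰] (hPS : IsPMF PS) (hpU : ∀ s, IsPMF (pU s))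
    (hW : ∀ u s, IsPMF (W u s))
    (hR' : mutualInfo (jointUS PS pU) < R') (hR : mutualInfo (jointUZ PS pU W) < R) :
    ∃ b, ∃ c ∈ Set.Ico (0 : ℝ) 1, ∀ n K M L : ℕ,
      (2 : ℝ) ^ (n * R') ≤ L → (2 : ℝ) ^ (n * R) ≤ K * M * L →
        |expDiv PS pU W n K M L| ≤ (1 + n * b) / Real.log 2 * (6 * c ^ n) := by
  obtain ⟨b, hb, hPhat⟩ := exists_PhatZ_le_pow_mul hPS hpU hW
  obtain ⟨c, hc, covering⟩ := exists_mean_l1Dist_PhatZ_le_pow hPS hpU hW hR' hR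
  refine ⟨Real.log b, c, hc, fun n K M L hL hKML => ?_⟩
  have codebook_nonneg : ∀ C : Codebook 𝒰 n K M L, 0 ≤ iidLaw _ (iidLaw (Fin n) (PU PS pU)) C :=
    (isPMF_fstLaw (isPMF_jointUS hPS hpU)).iid.iid.1
  have divergence (C : Codebook 𝒰 n K M L) :=
    abs_klDiv_le (PhatZ_nonneg hPS hpU hW C) (isPMF_sndLaw (isPMF_jointUZ hPS hpU hW)).iid.1
      (one_le_pow₀ hb) (hPhat n K M L C)
  have factor_nonneg : 0 ≤ (1 + n * Real.log b) / Real.log 2 := by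
    have := Real.log_nonneg hb
    positivity
  calc |expDiv PS pU W n K M L|
      ≤ mean (iidLaw _ (iidLaw (Fin n) (PU PS pU))) (fun C : Codebook 𝒰 n K M L =>
          |klDiv (PhatZ PS pU W C) (iidLaw (Fin n) (PZ PS pU W))|) :=
        abs_mean_le codebook_nonneg _
    _ ≤ mean (iidLaw _ (iidLaw (Fin n) (PU PS pU))) (fun C : Codebook 𝒰 n K M L =>
          (1 + n * Real.log b) / Real.log 2
            * l1Dist (PhatZ PS pU W C) (iidLaw (Fin n) (PZ PS pU W))) := by
        refine mean_mono codebook_nonneg fun C => ?_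
        rw [← Real.log_pow]
        exact divergence C
    _ ≤ (1 + n * Real.log b) / Real.log 2 * (6 * c ^ n) := by
        rw [mean_const_mul]
        gcongr
        exact covering n K M L hL hKML

lemma two_rpow_add_le_mul_natCeil (x y z : ℝ) :
    (2 : ℝ) ^ (x + y + z) ≤ ⌈(2 : ℝ) ^ x⌉₊ * ⌈(2 : ℝ) ^ y⌉₊ * ⌈(2 : ℝ) ^ z⌉₊ := by
  rw [Real.rpow_add two_pos, Real.rpow_add two_pos]
  gcongr <;> exact Nat.le_ceil _

theorem soft_covering_likelihood_encoder_general [DecidableEq 𝒰] (hPS : IsPMF PS)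
    (hpU : ∀ s, IsPMF (pU s)) (hW : ∀ u s, IsPMF (W u s))
    (hR' : mutualInfo (jointUS PS pU) < R') (hR : mutualInfo (jointUZ PS pU W) < R)
    {K M L : ℕ → ℕ} (hL : ∀ᶠ n : ℕ in Filter.atTop, (2 : ℝ) ^ (n * R') ≤ L n)
    (hKML : ∀ᶠ n : ℕ in Filter.atTop, (2 : ℝ) ^ (n * R) ≤ K n * M n * L n) :
    Filter.Tendsto (fun n => expDiv PS pU W n (K n) (M n) (L n)) Filter.atTop (nhds 0) := by
  obtain ⟨b, c, hc, bound⟩ := exists_abs_expDiv_le hPS hpU hW hR' hR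
  have rate_tendsto : Filter.Tendsto (fun n : ℕ => (1 + n * b) / Real.log 2 * (6 * c ^ n))
      Filter.atTop (nhds 0) := by
    have h := (tendsto_pow_atTop_nhds_zero_of_lt_one hc.1 hc.2).const_mul (6 / Real.log 2)
      |>.add ((tendsto_self_mul_const_pow_of_lt_one hc.1 hc.2).const_mul (6 * b / Real.log 2))
    simp only [mul_zero, add_zero] at h
    exact h.congr fun n => by ring
  refine squeeze_zero_norm' ?_ rate_tendsto
  filter_upwards [hL, hKML] with n hLn hKMLn
  exact bound n (K n) (M n) (L n) hLn hKMLn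

end SoftCoveringLimit

/-- **Lemma 2** (soft covering with likelihood encoding).  If `R' > I(U;S)`
and `R + R_K + R' > I(U;Z)`, then the expected divergence
`E_𝒞[D(P̂_{Zⁿ} ‖ P_Z^{×n})]`, with `2^{nR_K}` keys, `2^{nR}` messages and
`2^{nR'}` indices, vanishes as `n → ∞`. -/
theorem soft_covering_likelihood_encoder
    {𝒰 𝒮 𝒵 : Type} [Fintype 𝒰] [Fintype 𝒮] [Fintype 𝒵] [DecidableEq 𝒰]
    (PS : 𝒮 → ℝ) (pU : 𝒮 → 𝒰 → ℝ) (W : 𝒰 → 𝒮 → 𝒵 → ℝ)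
    (hPS : IsPMF PS) (hpU : ∀ s, IsPMF (pU s)) (hW : ∀ u s, IsPMF (W u s))
    (RK R R' : ℝ) (hRK : 0 ≤ RK) (hR : 0 ≤ R) (hR' : 0 ≤ R')
    (hcov1 : mutualInfo (fun u s => PS s * pU s u) < R')
    (hcov2 : mutualInfo (fun u z => ∑ s, PS s * pU s u * W u s z) < R + RK + R') :
    Filter.Tendsto
      (fun n : ℕ => expDiv PS pU W n
        ⌈(2 : ℝ) ^ ((n : ℝ) * RK)⌉₊ ⌈(2 : ℝ) ^ ((n : ℝ) * R)⌉₊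
        ⌈(2 : ℝ) ^ ((n : ℝ) * R')⌉₊)
      Filter.atTop (nhds 0) := by
  rw [add_comm R RK] at hcov2
  refine soft_covering_likelihood_encoder_general hPS hpU hW hcov1 hcov2
    (.of_forall fun n => Nat.le_ceil _) (.of_forall fun n => ?_)
  simpa only [mul_add] using two_rpow_add_le_mul_natCeil (n * RK) (n * R) (n * R')

end SoftCovering
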